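/- arXiv:1808.04712 — 2 statements merged into one kernel-verified Lean document; each statement's English description precedes it below -/
import Mathlib

section
/- Let G be an atomic splittable polymatroid congestion game in which all rank values ρ_i(U) and all demands d_i are rational and in which every cost function c_{i,e} and every derivative c'_{i,e} is L-Lipschitz for some L > 0. Then for every ε > 0 there exists k > 0 with ρ_i(U)/k ∈ ℕ for all players i and all U ⊆ E and d_i/k ∈ ℕ for all i, such that every exact equilibrium of the k-integral game G_k is an ε-approximate equilibrium of G. -/
/-- A rank function: submodular, monotone, normalized set function. -/
def IsRank {E : Type*} [Fintype E] [DecidableEq E] (ρ : Finset E → ℝ) : Prop :=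
  (∀ U V : Finset E, ρ (U ∪ V) + ρ (U ∩ V) ≤ ρ U + ρ V) ∧
  (∀ U V : Finset E, U ⊆ V → ρ U ≤ ρ V) ∧ ρ ∅ = 0

/-- Membership in the polymatroid base polytope `P_ρ(d)`. -/
def memBase {E : Type*} [Fintype E] [DecidableEq E] (ρ : Finset E → ℝ) (d : ℝ)
    (x : E → ℝ) : Prop :=
  (∀ e, 0 ≤ x e) ∧ (∀ U : Finset E, ∑ e ∈ U, x e ≤ ρ U) ∧ (∑ e, x e = d)

/-- Membership in the `k`-integral base polytope `P^k_ρ(d)`. -/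
def memKBase {E : Type*} [Fintype E] [DecidableEq E] (ρ : Finset E → ℝ) (d k : ℝ)
    (x : E → ℝ) : Prop :=
  memBase ρ d x ∧ ∀ e, ∃ q : ℕ, x e = k * q

/-!
If `k` divides all rank values and demands, every point of a base polytope is within `k`, in each
coordinate, of a `k`-integral one. To see this, cut the polytope down to the cell of the grid `kℤ^E`
around the point and maximise `∑ e, x e ^ 2` there: if some coordinate of the maximiser `x` were
outside `kℤ`, take the largest such coordinate `x e`. Tight sets are closed under intersection, so
the smallest tight set containing `e` has its sum in `kℤ` and thus contains another coordinate
outside `kℤ`, no larger than `x e`; shifting a little weight from it to `x e` keeps `x` in the cell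
and increases the sum of squares.

Costs are uniformly continuous on the compact set of profiles, so for small `k` rounding a deviation
to a `k`-integral one changes no player's cost by more than `ε`; and a `k`-integral deviation does
not pay off in an equilibrium of `G_k`.
-/

open Finset Filter Topology

section Exchange

variable {E : Type*} [DecidableEq E]

/-- The vector obtained from `x` by moving `t` units from coordinate `f` to coordinate `e`. -/
def exchange (x : E → ℝ) (e f : E) (t : ℝ) : E → ℝ :=
  x + Pi.single e t - Pi.single f t

lemma sum_exchange (x : E → ℝ) (e f : E) (t : ℝ) (U : Finset E) :
    ∑ a ∈ U, exchange x e f t a =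
      ∑ a ∈ U, x a + (if e ∈ U then t else 0) - (if f ∈ U then t else 0) := by
  simp [exchange, sum_add_distrib, sum_sub_distrib]

lemma eventually_exchange_mem_Icc {l u x : E → ℝ} (hx : x ∈ Set.Icc l u) {e f : E}
    (he : x e < u e) (hf : l f < x f) :
    ∀ᶠ t in 𝓝[>] 0, exchange x e f t ∈ Set.Icc l u := by
  filter_upwards [Ioo_mem_nhdsGT (sub_pos.2 he), Ioo_mem_nhdsGT (sub_pos.2 hf)]
    with t ⟨ht, hte⟩ ⟨_, htf⟩
  have hsingle_nonneg (a b : E) : (0 : ℝ) ≤ (Pi.single a t : E → ℝ) b :=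
    (Pi.single_nonneg.2 ht.le : (0 : E → ℝ) ≤ _) b
  refine ⟨fun a => ?_, fun a => ?_⟩ <;> simp only [exchange, Pi.add_apply, Pi.sub_apply]
  · have := hsingle_nonneg e a
    obtain rfl | haf := eq_or_ne a f
    · rw [Pi.single_eq_same]
      linarith
    · rw [Pi.single_eq_of_ne haf]
      linarith [hx.1 a]
  · have := hsingle_nonneg f a
    obtain rfl | hae := eq_or_ne a e
    · rw [Pi.single_eq_same]
      linarith
    · rw [Pi.single_eq_of_ne hae]
      linarith [hx.2 a]

lemma dotProduct_self_lt_exchange [Fintype E] {x : E → ℝ} {e f : E} (hfe : f ≠ e)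
    (hle : x f ≤ x e) {t : ℝ} (ht : 0 < t) :
    x ⬝ᵥ x < exchange x e f t ⬝ᵥ exchange x e f t := by
  have hexpand : exchange x e f t ⬝ᵥ exchange x e f t =
      x ⬝ᵥ x + 2 * t * (x e - x f) + 2 * t ^ 2 := by
    simp only [exchange, dotProduct_sub, dotProduct_add, sub_dotProduct, add_dotProduct,
      single_dotProduct, dotProduct_single, Pi.sub_apply, Pi.add_apply, Pi.single_eq_same,
      Pi.single_eq_of_ne hfe, Pi.single_eq_of_ne hfe.symm]
    ring
  have : 0 ≤ t * (x e - x f) := mul_nonneg ht.le (sub_nonneg.2 hle)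
  rw [hexpand]
  nlinarith [pow_pos ht 2]

end Exchange

section Tight

variable {E : Type*} {ρ : Finset E → ℝ} {x : E → ℝ}

/-- The constraint `x(U) ≤ ρ(U)` of the polymatroid holds with equality. -/
def IsTight (ρ : Finset E → ℝ) (x : E → ℝ) (U : Finset E) : Prop :=
  ∑ e ∈ U, x e = ρ U

lemma IsTight.inter [DecidableEq E] (hρ : ∀ U V, ρ (U ∪ V) + ρ (U ∩ V) ≤ ρ U + ρ V)
    (hx : ∀ U, ∑ e ∈ U, x e ≤ ρ U) {U V : Finset E} (hU : IsTight ρ x U) (hV : IsTight ρ x V) :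
    IsTight ρ x (U ∩ V) := by
  have := sum_union_inter (s₁ := U) (s₂ := V) (f := x)
  unfold IsTight at *
  linarith [hρ U V, hx (U ∪ V), hx (U ∩ V)]

variable [Fintype E] [DecidableEq E]

open Classical in
/-- The intersection of all tight sets containing `e`, known as the dependence set of `e`; it is
the whole ground set if there is no such tight set. -/
noncomputable def dependenceSet (ρ : Finset E → ℝ) (x : E → ℝ) (e : E) : Finset E :=
  ({U | IsTight ρ x U ∧ e ∈ U} : Finset (Finset E)).inf id

lemma mem_dependenceSet {e f : E} :
    f ∈ dependenceSet ρ x e ↔ ∀ U, IsTight ρ x U → e ∈ U → f ∈ U := by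
  simp [dependenceSet, Finset.mem_inf]

lemma dependenceSet_eq_univ_or_isTight
    (hρ : ∀ U V, ρ (U ∪ V) + ρ (U ∩ V) ≤ ρ U + ρ V) (hx : ∀ U, ∑ e ∈ U, x e ≤ ρ U) (e : E) :
    dependenceSet ρ x e = univ ∨ IsTight ρ x (dependenceSet ρ x e) := by
  refine inf_induction (p := fun U => U = univ ∨ IsTight ρ x U) (.inl rfl) ?_ ?_
  · rintro U (rfl | hU) V (rfl | hV)
    · simp
    · simp [hV]
    · simp [hU]
    · exact .inr (hU.inter hρ hx hV)
  · intro U hU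
    simp only [mem_filter, mem_univ, true_and] at hU
    exact .inr hU.1

lemma exists_ne_mem_dependenceSet_notMem {G : AddSubgroup ℝ}
    (hρ : ∀ U V, ρ (U ∪ V) + ρ (U ∩ V) ≤ ρ U + ρ V) (hρG : ∀ U, ρ U ∈ G)
    (hx : ∀ U, ∑ e ∈ U, x e ≤ ρ U) (hxG : ∑ e, x e ∈ G) {e : E} (he : x e ∉ G) :
    ∃ f ≠ e, f ∈ dependenceSet ρ x e ∧ x f ∉ G := by
  have hsum : ∑ a ∈ dependenceSet ρ x e, x a ∈ G := by
    obtain h | h := dependenceSet_eq_univ_or_isTight hρ hx e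
    · rwa [h]
    · rw [h]
      exact hρG _
  by_contra! hG
  have hrest : ∑ a ∈ (dependenceSet ρ x e).erase e, x a ∈ G :=
    G.sum_mem fun a ha => hG a (ne_of_mem_erase ha) (mem_of_mem_erase ha)
  rw [← add_sum_erase _ x (mem_dependenceSet.2 fun _ _ h => h)] at hsum
  exact he ((G.add_mem_cancel_right hrest).1 hsum)

lemma eventually_sum_exchange_le (hx : ∀ U, ∑ e ∈ U, x e ≤ ρ U) {e f : E}
    (hf : f ∈ dependenceSet ρ x e) :
    ∀ᶠ t in 𝓝[>] 0, ∀ U, ∑ a ∈ U, exchange x e f t a ≤ ρ U := by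
  refine eventually_all.2 fun U => ?_
  by_cases hefU : e ∈ U ∧ f ∉ U
  · have hslack : ∑ a ∈ U, x a < ρ U :=
      (hx U).lt_of_ne fun hU => hefU.2 (mem_dependenceSet.1 hf U hU hefU.1)
    filter_upwards [Ioo_mem_nhdsGT (sub_pos.2 hslack)] with t ht
    rw [sum_exchange, if_pos hefU.1, if_neg hefU.2]
    linarith [ht.2]
  · filter_upwards [self_mem_nhdsWithin] with t (ht : 0 < t)
    rw [sum_exchange]
    have := hx U
    split_ifs <;> first | linarith | tauto

end Tight

lemma exists_nat_eq_mul_iff {k : ℝ} (hk : 0 < k) {a : ℝ} :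
    (∃ q : ℕ, a = k * q) ↔ 0 ≤ a ∧ a ∈ AddSubgroup.zmultiples k := by
  constructor
  · rintro ⟨q, rfl⟩
    exact ⟨by positivity, q, by simp [mul_comm]⟩
  · rintro ⟨ha, n, rfl⟩
    simp only [zsmul_eq_mul] at ha ⊢
    lift n to ℕ using by exact_mod_cast nonneg_of_mul_nonneg_left ha hk
    exact ⟨n, by simp [mul_comm]⟩

section Rounding

variable {E : Type*} [Fintype E] {ρ : Finset E → ℝ} {d : ℝ} {l u : E → ℝ}

/-- The part of the base polytope of `ρ` with total `d` that lies in the box `[l, u]`. The sign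
constraint of `memBase` is left to the choice of `l`. -/
def boxBase (ρ : Finset E → ℝ) (d : ℝ) (l u : E → ℝ) : Set (E → ℝ) :=
  Set.Icc l u ∩ {x | (∀ U, ∑ e ∈ U, x e ≤ ρ U) ∧ ∑ e, x e = d}

lemma isCompact_boxBase : IsCompact (boxBase ρ d l u) := by
  have hrank_le (U : Finset E) : IsClosed {x : E → ℝ | ∑ e ∈ U, x e ≤ ρ U} :=
    isClosed_le (by fun_prop) continuous_const
  have htotal : IsClosed {x : E → ℝ | ∑ e, x e = d} :=
    isClosed_eq (by fun_prop) continuous_const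
  have hrank : IsClosed {x : E → ℝ | ∀ U, ∑ e ∈ U, x e ≤ ρ U} := by
    simpa only [Set.ofPred_forall] using isClosed_iInter hrank_le
  exact isCompact_Icc.inter_right (hrank.inter htotal)

variable [DecidableEq E]

theorem exists_mem_boxBase_forall_mem {G : AddSubgroup ℝ}
    (hρ : ∀ U V, ρ (U ∪ V) + ρ (U ∩ V) ≤ ρ U + ρ V) (hρG : ∀ U, ρ U ∈ G) (hdG : d ∈ G)
    (hlG : ∀ e, l e ∈ G) (huG : ∀ e, u e ∈ G) (hne : (boxBase ρ d l u).Nonempty) :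
    ∃ x ∈ boxBase ρ d l u, ∀ e, x e ∈ G := by
  classical
  obtain ⟨x, hx, hmax⟩ :=
    isCompact_boxBase.exists_isMaxOn hne (f := fun x => x ⬝ᵥ x) (by fun_prop)
  obtain ⟨hbox, hxρ, hxd⟩ := id hx
  refine ⟨x, hx, ?_⟩
  by_contra! hout
  obtain ⟨e, he, hemax⟩ :=
    ({e | x e ∉ G} : Finset E).exists_max_image x (hout.imp fun e he => by simpa using he)
  simp only [mem_filter, mem_univ, true_and] at he hemax
  obtain ⟨f, hfe, hfe_dep, hf⟩ :=
    exists_ne_mem_dependenceSet_notMem hρ hρG hxρ (hxd ▸ hdG) he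
  have heu : x e < u e := (hbox.2 e).lt_of_ne fun h => he (h ▸ huG e)
  have hfl : l f < x f := (hbox.1 f).lt_of_ne fun h => hf (h ▸ hlG f)
  obtain ⟨t, hbox_t, hρ_t, ht⟩ := ((eventually_exchange_mem_Icc hbox heu hfl).and
    ((eventually_sum_exchange_le hxρ hfe_dep).and self_mem_nhdsWithin)).exists
  have hmem : exchange x e f t ∈ boxBase ρ d l u :=
    ⟨hbox_t, hρ_t, by simpa [sum_exchange] using hxd⟩
  exact (hmax hmem).not_gt (dotProduct_self_lt_exchange hfe (hemax f hf) ht)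

theorem exists_memKBase_dist_le (hρ : ∀ U V, ρ (U ∪ V) + ρ (U ∩ V) ≤ ρ U + ρ V) {k : ℝ}
    (hk : 0 < k) (hρk : ∀ U, ∃ q : ℕ, ρ U = k * q) (hdk : ∃ q : ℕ, d = k * q) {y : E → ℝ}
    (hy : memBase ρ d y) :
    ∃ z, memKBase ρ d k z ∧ dist z y ≤ k := by
  let l : E → ℝ := fun e => ⌊y e / k⌋ * k
  let u : E → ℝ := fun e => ⌈y e / k⌉ * k
  have hly : l ≤ y := fun e => (le_div_iff₀ hk).1 (Int.floor_le _)
  have hyu : y ≤ u := fun e => (div_le_iff₀ hk).1 (Int.le_ceil _)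
  have hl_nonneg (e : E) : 0 ≤ l e :=
    mul_nonneg (mod_cast Int.floor_nonneg.2 (div_nonneg (hy.1 e) hk.le)) hk.le
  have hyl (e : E) : y e < l e + k := by
    have := (div_lt_iff₀ hk).1 (Int.lt_floor_add_one (y e / k))
    linarith
  have huy (e : E) : u e < y e + k := by
    have := mul_lt_mul_of_pos_right (Int.ceil_lt_add_one (y e / k)) hk
    rwa [add_mul, div_mul_cancel₀ _ hk.ne', one_mul] at this
  obtain ⟨z, ⟨⟨hlz, hzu⟩, hzρ, hzd⟩, hzk⟩ := exists_mem_boxBase_forall_mem hρ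
    (fun U => ((exists_nat_eq_mul_iff hk).1 (hρk U)).2) ((exists_nat_eq_mul_iff hk).1 hdk).2
    (fun e => ⟨⌊y e / k⌋, zsmul_eq_mul _ _⟩) (fun e => ⟨⌈y e / k⌉, zsmul_eq_mul _ _⟩)
    (⟨y, ⟨hly, hyu⟩, hy.2⟩ : (boxBase ρ d l u).Nonempty)
  have hz_nonneg (e : E) : 0 ≤ z e := (hl_nonneg e).trans (hlz e)
  refine ⟨z, ⟨⟨hz_nonneg, hzρ, hzd⟩, fun e => (exists_nat_eq_mul_iff hk).2
    ⟨hz_nonneg e, hzk e⟩⟩, (dist_pi_le_iff hk.le).2 fun e => ?_⟩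
  rw [Real.dist_eq, abs_le]
  constructor <;> linarith [hlz e, hzu e, hyl e, huy e]

end Rounding

theorem exists_pos_le_forall_eq_mul_nat {ι : Type*} [Finite ι] {a : ι → ℝ}
    (ha : ∀ i, ∃ q : ℚ, a i = q) (ha_nonneg : ∀ i, 0 ≤ a i) {δ : ℝ} (hδ : 0 < δ) :
    ∃ k > 0, k ≤ δ ∧ ∀ i, ∃ q : ℕ, a i = k * q := by
  cases nonempty_fintype ι
  choose r hr using ha
  obtain ⟨n, hn⟩ := exists_nat_one_div_lt hδ
  let D : ℕ := ∏ i, (r i).den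
  have hD : 0 < D := prod_pos fun i _ => (r i).den_pos
  have hk : (0 : ℝ) < 1 / (n + 1) / D := by positivity
  refine ⟨_, hk, (div_le_self (by positivity) (mod_cast hD)).trans hn.le, fun i => ?_⟩
  refine (exists_nat_eq_mul_iff hk).2 ⟨ha_nonneg i, ?_⟩
  obtain ⟨m, hm⟩ : (r i).den ∣ D := dvd_prod_of_mem _ (mem_univ i)
  have hr_mul : (r i : ℝ) * (r i).den = (r i).num := mod_cast Rat.mul_den_eq_num (r i)
  refine ⟨(r i).num * m * (n + 1), ?_⟩
  have hD_ne : (D : ℝ) ≠ 0 := by positivity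
  simp only [zsmul_eq_mul]
  push_cast
  rw [← hr_mul, hr]
  field_simp
  rw [hm]
  push_cast
  ring

section Game

variable {N E : Type*} [Fintype E]

lemma IsRank.nonneg [DecidableEq E] {ρ : Finset E → ℝ} (hρ : IsRank ρ) (U : Finset E) :
    0 ≤ ρ U :=
  hρ.2.2 ▸ hρ.2.1 ∅ U (empty_subset U)

lemma memBase.mem_Icc [DecidableEq E] {ρ : Finset E → ℝ} {d : ℝ} {x : E → ℝ}
    (hx : memBase ρ d x) : x ∈ Set.Icc 0 (fun _ => d) :=
  ⟨hx.1, fun e => hx.2.2 ▸ single_le_sum (fun e _ => hx.1 e) (mem_univ e)⟩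

theorem exists_pos_forall_abs_update_sub_update_le [Finite N] [DecidableEq N]
    {π : (N → E → ℝ) → N → ℝ} (hπ : ContinuousOn π (Set.Ici 0)) (d : N → ℝ)
    {ε : ℝ} (hε : 0 < ε) :
    ∃ δ > 0, ∀ x : N → E → ℝ, (∀ i, x i ∈ Set.Icc 0 (fun _ => d i)) →
      ∀ i, ∀ y ∈ Set.Icc 0 (fun _ => d i), ∀ z ∈ Set.Icc 0 (fun _ => d i), dist z y ≤ δ →
        |π (Function.update x i z) i - π (Function.update x i y) i| ≤ ε := by
  cases nonempty_fintype N
  let S : Set (N → E → ℝ) := Set.univ.pi fun i => Set.Icc 0 fun _ => d i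
  have hS : IsCompact S := isCompact_univ_pi fun i => isCompact_Icc
  have hS_nonneg : S ⊆ Set.Ici 0 := fun x hx i => (hx i trivial).1
  obtain ⟨δ, hδ, hπδ⟩ := Metric.uniformContinuousOn_iff_le.1
    (hS.uniformContinuousOn_of_continuous (hπ.mono hS_nonneg)) ε hε
  refine ⟨δ, hδ, fun x hx i y hy z hz hzy => ?_⟩
  have hupdate (w : E → ℝ) (hw : w ∈ Set.Icc 0 fun _ => d i) : Function.update x i w ∈ S :=
    (Set.update_mem_pi_iff_of_mem fun j _ => hx j).2 fun _ => hw
  have hdist : dist (Function.update x i z) (Function.update x i y) ≤ δ := by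
    refine (dist_pi_le_iff hδ.le).2 fun j => ?_
    obtain rfl | hj := eq_or_ne j i
    · simpa using hzy
    · simpa [hj] using hδ.le
  exact (dist_le_pi_dist _ _ i).trans (hπδ _ (hupdate z hz) _ (hupdate y hy) hdist)

/-- The players' costs `π_i` in the congestion game with resource costs `c`. -/
def congestionCost [Fintype N] (c : N → E → ℝ → ℝ) (x : N → E → ℝ) (i : N) : ℝ :=
  ∑ e, c i e (∑ j, x j e) * x i e

lemma continuous_congestionCost [Fintype N] {c : N → E → ℝ → ℝ} (hc : ∀ i e, Continuous (c i e)) :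
    Continuous (congestionCost c) := by
  unfold congestionCost
  fun_prop

end Game

theorem stmt_10_general {N E : Type*} [Finite N] [DecidableEq N] [Fintype E] [DecidableEq E]
    (ρ : N → Finset E → ℝ) (hρ : ∀ i, IsRank (ρ i))
    (hρrat : ∀ i U, ∃ q : ℚ, ρ i U = (q : ℝ))
    (d : N → ℝ) (hd : ∀ i, 0 ≤ d i) (hdrat : ∀ i, ∃ q : ℚ, d i = (q : ℝ))
    (π : (N → E → ℝ) → N → ℝ) (hπ : ContinuousOn π (Set.Ici 0)) (ε : ℝ) (hε : 0 < ε) :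
    ∃ k > 0, (∀ i U, ∃ q : ℕ, ρ i U = k * q) ∧ (∀ i, ∃ q : ℕ, d i = k * q) ∧
      ∀ x : N → E → ℝ, (∀ i, memKBase (ρ i) (d i) k (x i)) →
        (∀ i yi, memKBase (ρ i) (d i) k yi → π (Function.update x i yi) i ≥ π x i) →
        ∀ i yi, memBase (ρ i) (d i) yi → π (Function.update x i yi) i ≥ π x i - ε := by
  obtain ⟨δ, hδ, hπδ⟩ := exists_pos_forall_abs_update_sub_update_le hπ d hε
  obtain ⟨k, hk, hkδ, hdvd⟩ := exists_pos_le_forall_eq_mul_nat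
    (a := Sum.elim (fun p : N × Finset E => ρ p.1 p.2) d)
    (Sum.forall.2 ⟨fun p => hρrat p.1 p.2, hdrat⟩)
    (Sum.forall.2 ⟨fun p => (hρ p.1).nonneg p.2, hd⟩) hδ
  have hρk (i : N) (U : Finset E) : ∃ q : ℕ, ρ i U = k * q := hdvd (.inl (i, U))
  have hdk (i : N) : ∃ q : ℕ, d i = k * q := hdvd (.inr i)
  refine ⟨k, hk, hρk, hdk, fun x hx hequil i y hy => ?_⟩
  obtain ⟨z, hz, hzy⟩ := exists_memKBase_dist_le (hρ i).1 hk (hρk i) (hdk i) hy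
  have hround := hπδ x (fun j => (hx j).1.mem_Icc) i y hy.mem_Icc z hz.1.mem_Icc (hzy.trans hkδ)
  linarith [hequil i z hz, (abs_le.1 hround).2]

/-- Theorem 1, the main result of the paper: in an atomic splittable polymatroid
congestion game with rational rank values and demands, and `L`-Lipschitz costs
and derivatives, for every `ε > 0` there is a packet size `k > 0` dividing all
rank values and demands such that every exact equilibrium of the `k`-integral
game `G_k` is an `ε`-approximate equilibrium of `G`. -/
theorem stmt_10 {N E : Type*} [Fintype N] [Nonempty N] [DecidableEq N]
    [Fintype E] [DecidableEq E]
    (ρ : N → Finset E → ℝ) (hρ : ∀ i, IsRank (ρ i))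
    (hρrat : ∀ i U, ∃ q : ℚ, ρ i U = (q : ℝ))
    (d : N → ℝ) (hd : ∀ i, 0 < d i) (hdρ : ∀ i, d i ≤ ρ i Finset.univ)
    (hdrat : ∀ i, ∃ q : ℚ, d i = (q : ℝ))
    (c : N → E → ℝ → ℝ)
    (hcnonneg : ∀ i e t, 0 ≤ c i e t)
    (hcmono : ∀ i e, Monotone (c i e))
    (hcdiff : ∀ i e, Differentiable ℝ (c i e))
    (hcconv : ∀ i e, ConvexOn ℝ Set.univ (c i e))
    (L : ℝ) (hL : 0 < L)
    (hlip : ∀ i e x y, |c i e y - c i e x| ≤ L * |y - x|)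
    (hlip' : ∀ i e x y, |deriv (c i e) y - deriv (c i e) x| ≤ L * |y - x|)
    (ε : ℝ) (hε : 0 < ε) :
    ∃ k > 0, (∀ i U, ∃ q : ℕ, ρ i U = k * q) ∧ (∀ i, ∃ q : ℕ, d i = k * q) ∧
      ∀ x : N → E → ℝ, (∀ i, memKBase (ρ i) (d i) k (x i)) →
        (∀ i yi, memKBase (ρ i) (d i) k yi →
          ∑ e, c i e (∑ j, Function.update x i yi j e) * yi e ≥
            ∑ e, c i e (∑ j, x j e) * x i e) →
        ∀ i yi, memBase (ρ i) (d i) yi →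
          ∑ e, c i e (∑ j, Function.update x i yi j e) * yi e ≥
            ∑ e, c i e (∑ j, x j e) * x i e - ε := by
  simpa only [congestionCost, Function.update_self] using
    stmt_10_general ρ hρ hρrat d (fun i => (hd i).le) hdrat (congestionCost c)
      (continuous_congestionCost fun i e => (hcdiff i e).continuous).continuousOn ε hε
end

section
/- Let G be an atomic splittable polymatroid congestion game in which every cost function c_{i,e} and every derivative c'_{i,e} is L-Lipschitz, let k > 0 with d_i/k ∈ ℕ for all i, and let x be any feasible strategy profile of the k-integral game G_k. Then for every player i and every resource e: μ^{+k}_{i,e}(x)/k ≤ μ_{i,e}(x) + k·L·(d_i + 1), and if x_{i,e} > 0 also μ^{−k}_{i,e}(x)/k ≥ μ_{i,e}(x) − k·L·(d_i + 1). -/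
/-!
A player with load `y` on a resource of aggregate load `t` pays `y * c t` there. Changing both loads
by a signed amount `h` changes this cost by
`h * (c t + y * c' t) + h * (c (t + h) - c t) + y * (c (t + h) - c t - h * c' t)`.
The first term is `h` times the marginal cost; the other two are `O(h ^ 2)`, because `c` and `c'`
are Lipschitz. Taking `h = k` and `h = -k` treats both discrete marginal costs at once.
-/

open scoped NNReal

theorem memBase.abs_apply_le {E : Type*} [Fintype E] [DecidableEq E] {ρ : Finset E → ℝ} {d : ℝ}
    {x : E → ℝ} (hx : memBase ρ d x) (e : E) : |x e| ≤ d := by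
  obtain ⟨hnonneg, -, hsum⟩ := hx
  rw [abs_of_nonneg (hnonneg e), ← hsum]
  exact Finset.single_le_sum (fun f _ ↦ hnonneg f) (Finset.mem_univ e)

theorem norm_sub_sub_smul_deriv_le_of_lipschitzWith_deriv {𝕜 F : Type*} [RCLike 𝕜]
    [NormedAddCommGroup F] [NormedSpace 𝕜 F] {f : 𝕜 → F} {L : ℝ≥0} (hf : Differentiable 𝕜 f)
    (hL : LipschitzWith L (deriv f)) (a b : 𝕜) :
    ‖f b - f a - (b - a) • deriv f a‖ ≤ L * ‖b - a‖ ^ 2 := by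
  have hderiv (z : 𝕜) : HasDerivAt (fun z ↦ f z - z • deriv f a) (deriv f z - deriv f a) z := by
    simpa using (hf z).hasDerivAt.fun_sub ((hasDerivAt_id z).smul_const (deriv f a))
  have hbound : ∀ z ∈ Metric.closedBall a ‖b - a‖, ‖deriv f z - deriv f a‖ ≤ L * ‖b - a‖ := by
    intro z hz
    rw [mem_closedBall_iff_norm] at hz
    exact (hL.norm_sub_le z a).trans (by gcongr)
  calc ‖f b - f a - (b - a) • deriv f a‖
      = ‖(f b - b • deriv f a) - (f a - a • deriv f a)‖ := by rw [sub_smul, sub_sub_sub_comm]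
    _ ≤ L * ‖b - a‖ * ‖b - a‖ :=
      (convex_closedBall a ‖b - a‖).norm_image_sub_le_of_norm_hasDerivWithin_le
        (fun z _ ↦ (hderiv z).hasDerivWithinAt) hbound
        (Metric.mem_closedBall_self (norm_nonneg _)) (mem_closedBall_iff_norm.mpr le_rfl)
    _ = L * ‖b - a‖ ^ 2 := by rw [mul_assoc, sq]

/-- The marginal cost `μ = c t + y * c' t` of a player with load `y` on a resource with cost
function `c` and aggregate load `t`. The aggregate load is an independent argument, so it may
include the loads of any number of other players. -/
noncomputable def marginalCost (c : ℝ → ℝ) (y t : ℝ) : ℝ :=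
  c t + y * deriv c t

/-- The discrete marginal cost `μ^{+k}`: what a player with load `y` on a resource with aggregate
load `t` pays for `k` additional units. A negative `k` encodes a withdrawal. -/
def marginalCostAdd (c : ℝ → ℝ) (k y t : ℝ) : ℝ :=
  (y + k) * c (t + k) - y * c t

/-- The discrete marginal cost `μ^{-k}`: what a player with load `y` on a resource with aggregate
load `t` saves by withdrawing `k` units. -/
def marginalCostSub (c : ℝ → ℝ) (k y t : ℝ) : ℝ :=
  y * c t - (y - k) * c (t - k)

theorem marginalCostSub_eq_neg_marginalCostAdd_neg (c : ℝ → ℝ) (k y t : ℝ) :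
    marginalCostSub c k y t = -marginalCostAdd c (-k) y t := by
  simp only [marginalCostSub, marginalCostAdd, sub_eq_add_neg, neg_add_rev, neg_neg]

section Lipschitz

variable {c : ℝ → ℝ} {K L : ℝ≥0}

theorem abs_marginalCostAdd_sub_mul_marginalCost_le (hc : Differentiable ℝ c)
    (hK : LipschitzWith K c) (hL : LipschitzWith L (deriv c)) (h y t : ℝ) :
    |marginalCostAdd c h y t - h * marginalCost c y t| ≤ (K + L * |y|) * |h| ^ 2 := by
  have hval : |c (t + h) - c t| ≤ K * |h| := by
    simpa [Real.dist_eq] using hK.dist_le_mul (t + h) t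
  have htaylor : |c (t + h) - c t - h * deriv c t| ≤ L * |h| ^ 2 := by
    simpa using norm_sub_sub_smul_deriv_le_of_lipschitzWith_deriv hc hL t (t + h)
  calc |marginalCostAdd c h y t - h * marginalCost c y t|
      = |h * (c (t + h) - c t) + y * (c (t + h) - c t - h * deriv c t)| := by
        rw [marginalCostAdd, marginalCost]
        ring_nf
    _ ≤ |h| * |c (t + h) - c t| + |y| * |c (t + h) - c t - h * deriv c t| := by
        simpa only [abs_mul] using
          abs_add_le (h * (c (t + h) - c t)) (y * (c (t + h) - c t - h * deriv c t))
    _ ≤ |h| * (K * |h|) + |y| * (L * |h| ^ 2) := by gcongr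
    _ = (K + L * |y|) * |h| ^ 2 := by ring

theorem abs_marginalCostAdd_div_sub_marginalCost_le (hc : Differentiable ℝ c)
    (hK : LipschitzWith K c) (hL : LipschitzWith L (deriv c)) {h : ℝ} (hh : h ≠ 0) (y t : ℝ) :
    |marginalCostAdd c h y t / h - marginalCost c y t| ≤ (K + L * |y|) * |h| := by
  rw [div_sub' hh, abs_div, div_le_iff₀ (abs_pos.mpr hh), mul_assoc, ← sq]
  exact abs_marginalCostAdd_sub_mul_marginalCost_le hc hK hL h y t

theorem abs_marginalCostSub_div_sub_marginalCost_le (hc : Differentiable ℝ c)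
    (hK : LipschitzWith K c) (hL : LipschitzWith L (deriv c)) {h : ℝ} (hh : h ≠ 0) (y t : ℝ) :
    |marginalCostSub c h y t / h - marginalCost c y t| ≤ (K + L * |y|) * |h| := by
  rw [marginalCostSub_eq_neg_marginalCostAdd_neg, neg_div, ← div_neg, ← abs_neg h]
  exact abs_marginalCostAdd_div_sub_marginalCost_le hc hK hL (neg_ne_zero.mpr hh) y t

end Lipschitz

theorem stmt_15_general {c : ℝ → ℝ} (hc : Differentiable ℝ c) {L : ℝ}
    (hlip : ∀ s t, |c t - c s| ≤ L * |t - s|)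
    (hlip' : ∀ s t, |deriv c t - deriv c s| ≤ L * |t - s|)
    {k : ℝ} (hk : 0 < k) {y d : ℝ} (hy : |y| ≤ d) (t : ℝ) :
    |marginalCostAdd c k y t / k - marginalCost c y t| ≤ k * L * (d + 1) ∧
      |marginalCostSub c k y t / k - marginalCost c y t| ≤ k * L * (d + 1) := by
  have hL : 0 ≤ L := by simpa using (abs_nonneg _).trans (hlip 0 1)
  lift L to ℝ≥0 using hL
  have hcL : LipschitzWith L c := .of_dist_le_mul fun s t ↦ hlip t s
  have hcL' : LipschitzWith L (deriv c) := .of_dist_le_mul fun s t ↦ hlip' t s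
  have hbound : (L + L * |y|) * |k| ≤ k * L * (d + 1) :=
    calc (L + L * |y|) * |k| = k * L * (|y| + 1) := by rw [abs_of_pos hk]; ring
      _ ≤ k * L * (d + 1) := by gcongr
  exact ⟨(abs_marginalCostAdd_div_sub_marginalCost_le hc hcL hcL' hk.ne' y t).trans hbound,
    (abs_marginalCostSub_div_sub_marginalCost_le hc hcL hcL' hk.ne' y t).trans hbound⟩

/-- Lemma 2 of the paper in game form: for any feasible profile `x` of the
`k`-integral game, `μ^{+k}_{i,e}(x)/k ≤ μ_{i,e}(x) + kL(d_i+1)`, and if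
`x_{i,e} > 0` also `μ^{−k}_{i,e}(x)/k ≥ μ_{i,e}(x) − kL(d_i+1)`. -/
theorem stmt_15 {N E : Type*} [Fintype N] [Nonempty N] [DecidableEq N]
    [Fintype E] [DecidableEq E]
    (ρ : N → Finset E → ℝ) (hρ : ∀ i, IsRank (ρ i))
    (d : N → ℝ) (hd : ∀ i, 0 < d i) (hdρ : ∀ i, d i ≤ ρ i Finset.univ)
    (c : N → E → ℝ → ℝ)
    (hcnonneg : ∀ i e t, 0 ≤ c i e t)
    (hcmono : ∀ i e, Monotone (c i e))
    (hcdiff : ∀ i e, Differentiable ℝ (c i e))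
    (hcconv : ∀ i e, ConvexOn ℝ Set.univ (c i e))
    (L : ℝ)
    (hlip : ∀ i e x y, |c i e y - c i e x| ≤ L * |y - x|)
    (hlip' : ∀ i e x y, |deriv (c i e) y - deriv (c i e) x| ≤ L * |y - x|)
    (k : ℝ) (hk : 0 < k) (hdk : ∀ i, ∃ q : ℕ, d i = k * q)
    (x : N → E → ℝ) (hx : ∀ i, memKBase (ρ i) (d i) k (x i))
    (i : N) (e : E) :
    ((x i e + k) * c i e ((∑ j, x j e) + k) - x i e * c i e (∑ j, x j e)) / k ≤
        (c i e (∑ j, x j e) + x i e * deriv (c i e) (∑ j, x j e)) +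
          k * L * (d i + 1) ∧
      (0 < x i e →
        (x i e * c i e (∑ j, x j e) - (x i e - k) * c i e ((∑ j, x j e) - k)) / k ≥
          (c i e (∑ j, x j e) + x i e * deriv (c i e) (∑ j, x j e)) -
            k * L * (d i + 1)) := by
  obtain ⟨hadd, hsub⟩ := stmt_15_general (hcdiff i e) (hlip i e) (hlip' i e) hk
    ((hx i).1.abs_apply_le e) (∑ j, x j e)
  exact ⟨sub_le_iff_le_add'.mp (le_of_abs_le hadd), fun _ ↦ sub_le_of_abs_sub_le_left hsub⟩
end
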